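/- For a von Neumann algebra R, the following are equivalent: (i) every finitely additive probability measure on the projection lattice P(R) extends to a state of R; (ii) every global section of the state presheaf S_R (assigning to each abelian von Neumann subalgebra A its state space S(A), with ordinary restriction of functionals) is induced by a state of R. -/

import Mathlib

variable {H : Type*} [NormedAddCommGroup H] [InnerProductSpace ℂ H] [CompleteSpace H]

/-- A projection (selfadjoint idempotent) in `B(H)`. -/
def IsProjOp (p : H →L[ℂ] H) : Prop := IsSelfAdjoint p ∧ IsIdempotentElem p

/-- A state on a (sub)set `R` of `B(H)`: normalized, linear on `R`, positive. -/
def IsStateOn (R : Set (H →L[ℂ] H)) (φ : (H →L[ℂ] H) → ℂ) : Prop :=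
  φ 1 = 1 ∧
  (∀ a ∈ R, ∀ b ∈ R, φ (a + b) = φ a + φ b) ∧
  (∀ c : ℂ, ∀ a ∈ R, φ (c • a) = c * φ a) ∧
  (∀ a ∈ R, 0 ≤ (φ (star a * a)).re ∧ (φ (star a * a)).im = 0)

/-- A finitely additive probability measure on the projection lattice of `R`. -/
def IsProbMeasureOn (R : VonNeumannAlgebra H) (μ : (H →L[ℂ] H) → ℝ) : Prop :=
  μ 1 = 1 ∧ (∀ p, p ∈ R → IsProjOp p → 0 ≤ μ p ∧ μ p ≤ 1) ∧
  ∀ p q, p ∈ R → q ∈ R → IsProjOp p → IsProjOp q → p * q = 0 → μ (p + q) = μ p + μ q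

/-- An abelian von Neumann algebra. -/
def IsAbelianVN (A : VonNeumannAlgebra H) : Prop := ∀ a ∈ A, ∀ b ∈ A, a * b = b * a

/-- A global section of the state presheaf of `R`: a family of states, one on
each abelian von Neumann subalgebra of `R`, compatible under ordinary
restriction. -/
def IsStateSection (R : VonNeumannAlgebra H)
    (Φ : VonNeumannAlgebra H → (H →L[ℂ] H) → ℂ) : Prop :=
  (∀ A : VonNeumannAlgebra H, IsAbelianVN A → (A : Set (H →L[ℂ] H)) ⊆ R →
      IsStateOn (A : Set (H →L[ℂ] H)) (Φ A)) ∧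
  ∀ A B : VonNeumannAlgebra H, IsAbelianVN A → IsAbelianVN B →
    (A : Set (H →L[ℂ] H)) ⊆ R → (B : Set (H →L[ℂ] H)) ⊆ R →
    (A : Set (H →L[ℂ] H)) ⊆ (B : Set (H →L[ℂ] H)) → ∀ a ∈ A, Φ A a = Φ B a

lemma vn_mem_iff (A : VonNeumannAlgebra H) (x : H →L[ℂ] H) :
    x ∈ A ↔ ∀ y ∈ A.commutant, Commute x y := by
  conv_lhs => rw [← VonNeumannAlgebra.commutant_commutant A]
  rw [VonNeumannAlgebra.mem_commutant_iff]
  exact forall₂_congr fun y _ => ⟨fun h => h.symm, fun h => h.symm⟩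

lemma vn_comm {A : VonNeumannAlgebra H} {x y : H →L[ℂ] H} (hx : x ∈ A) (hy : y ∈ A.commutant) :
    Commute x y := (vn_mem_iff A x).1 hx y hy

lemma vn_smul (A : VonNeumannAlgebra H) (c : ℂ) {x : H →L[ℂ] H} (hx : x ∈ A) : c • x ∈ A :=
  (vn_mem_iff A _).2 fun _ hy => (vn_comm hx hy).smul_left c

lemma vn_posPart {A : VonNeumannAlgebra H} {b : H →L[ℂ] H} (hb : b ∈ A) : b⁺ ∈ A := by
  rw [vn_mem_iff]
  intro y hy
  rw [CFC.posPart_def]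
  exact Commute.cfcₙ_real (vn_comm hb hy) _

lemma vn_negPart {A : VonNeumannAlgebra H} {b : H →L[ℂ] H} (hb : b ∈ A) : b⁻ ∈ A := by
  rw [vn_mem_iff]
  intro y hy
  rw [CFC.negPart_def]
  exact Commute.cfcₙ_real (vn_comm hb hy) _

lemma vn_sqrt {A : VonNeumannAlgebra H} {b : H →L[ℂ] H} (hb : b ∈ A) : CFC.sqrt b ∈ A := by
  rw [vn_mem_iff]
  intro y hy
  rw [CFC.sqrt]
  exact Commute.cfcₙ_nnreal (vn_comm hb hy) _

lemma proj_nonneg {p : H →L[ℂ] H} (hp : IsProjOp p) : 0 ≤ p := by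
  have := star_mul_self_nonneg p
  rwa [hp.1.star_eq, hp.2.eq] at this

lemma proj_compl {p : H →L[ℂ] H} (hp : IsProjOp p) : IsProjOp (1 - p) :=
  ⟨(IsSelfAdjoint.one _).sub hp.1, hp.2.one_sub⟩

lemma proj_mul {p q : H →L[ℂ] H} (hp : IsProjOp p) (hq : IsProjOp q) (h : p * q = q * p) :
    IsProjOp (p * q) :=
  ⟨(hp.1.commute_iff hq.1).1 h, IsIdempotentElem.mul_of_commute h hp.2 hq.2⟩

lemma halving {A : VonNeumannAlgebra H} {a : H →L[ℂ] H} (ha : a ∈ A) (h0 : 0 ≤ a) (h1 : a ≤ 1) :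
    ∃ p ∈ A, IsProjOp p ∧ 0 ≤ a + a - p ∧ a + a - p ≤ 1 := by
  set b := a + a - 1 with hb
  have hbA : b ∈ A := sub_mem (add_mem ha ha) (one_mem _)
  have hbl : -1 ≤ b := by
    rw [hb, ← sub_nonneg]
    have : a + a - 1 - -1 = a + a := by abel
    rw [this]; exact add_nonneg h0 h0
  have hbu : b ≤ 1 := by
    rw [hb, sub_le_iff_le_add]; exact add_le_add h1 h1
  have hbs : IsSelfAdjoint b :=
    ((IsSelfAdjoint.of_nonneg h0).add (IsSelfAdjoint.of_nonneg h0)).sub (IsSelfAdjoint.one _)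
  have : CompleteSpace ((b⁺ : H →L[ℂ] H).ker) :=
    (ContinuousLinearMap.isClosed_ker (b⁺)).completeSpace_coe
  set e := ((b⁺ : H →L[ℂ] H).ker).starProjection with he
  have heP : IsStarProjection e := isStarProjection_starProjection
  have hproj : IsProjOp e := ⟨heP.2, heP.1⟩
  have heA : e ∈ A := by
    rw [VonNeumannAlgebra.IsStarProjection.mem_iff heP]
    intro y hy
    rw [he, Submodule.range_starProjection, Module.End.mem_invtSubmodule]
    intro v hv
    have hc := vn_comm (vn_posPart hbA) hy
    have h2 := congrArg (fun T : H →L[ℂ] H => T v) hc.eq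
    have hv' : (b⁺ : H →L[ℂ] H) v = 0 := hv
    simp only [mul_apply_eq_comp, hv', map_zero] at h2
    exact h2
  have e1 : b⁺ * e = 0 := by
    ext v
    have : e v ∈ (b⁺ : H →L[ℂ] H).ker := Submodule.starProjection_apply_mem _ v
    exact this
  have e2 : e * b⁻ = b⁻ := by
    ext v
    have : (b⁻ : H →L[ℂ] H) v ∈ (b⁺ : H →L[ℂ] H).ker :=
      congrArg (fun T : H →L[ℂ] H => T v) (CFC.posPart_mul_negPart b)
    exact Submodule.starProjection_eq_self_iff.2 this
  have sp : IsSelfAdjoint (b⁺) := IsSelfAdjoint.of_nonneg (CFC.posPart_nonneg b)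
  have sn : IsSelfAdjoint (b⁻) := IsSelfAdjoint.of_nonneg (CFC.negPart_nonneg b)
  have e1' : e * b⁺ = 0 := by
    have := congrArg star e1
    simpa [sp.star_eq, hproj.1.star_eq] using this
  have e2' : b⁻ * e = b⁻ := by
    have := congrArg star e2
    simpa [sn.star_eq, hproj.1.star_eq] using this
  have hdec : b⁺ - b⁻ = b := CFC.posPart_sub_negPart b hbs
  have k1 : e * b * e = - b⁻ := by
    have : e * b * e = e * (b⁺ - b⁻) * e := by rw [hdec]
    rw [this, mul_sub, e1', e2, sub_mul, e2']; simp
  have k2 : (1 - e) * b * (1 - e) = b⁺ := by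
    have : (1 - e) * b * (1 - e) = (1 - e) * (b⁺ - b⁻) * (1 - e) := by rw [hdec]
    rw [this]
    simp only [mul_sub, sub_mul, one_mul, mul_one, e1, e1', e2, e2', zero_mul]
    abel
  have l1 := hproj.1.conjugate_le_conjugate hbl
  have l2 := (proj_compl hproj).1.conjugate_le_conjugate hbu
  rw [k1, mul_neg, mul_one, neg_mul, hproj.2.eq, neg_le_neg_iff] at l1
  rw [k2, mul_one, (proj_compl hproj).2.eq] at l2
  refine ⟨1 - e, sub_mem (one_mem _) heA, proj_compl hproj, ?_⟩
  have hx : a + a - (1 - e) = b⁺ + (e - b⁻) := by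
    have : a + a - (1 - e) = b + e := by rw [hb]; abel
    have h3 : b + e = b⁺ - b⁻ + e := by rw [hdec]
    rw [this, h3]; abel
  rw [hx]
  constructor
  · exact add_nonneg (CFC.posPart_nonneg b) (sub_nonneg.2 l1)
  · calc b⁺ + (e - b⁻) ≤ (1 - e) + e :=
          add_le_add l2 (sub_le_self _ (CFC.negPart_nonneg b))
      _ = 1 := by abel

lemma state_pos {A : VonNeumannAlgebra H} {φ : (H →L[ℂ] H) → ℂ}
    (hφ : IsStateOn (A : Set (H →L[ℂ] H)) φ) {a : H →L[ℂ] H} (ha : a ∈ A) (h0 : 0 ≤ a) :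
    0 ≤ (φ a).re ∧ (φ a).im = 0 := by
  have h := hφ.2.2.2 (CFC.sqrt a) (vn_sqrt ha)
  rwa [(IsSelfAdjoint.of_nonneg (CFC.sqrt_nonneg a)).star_eq, CFC.sqrt_mul_sqrt_self a h0] at h

lemma state_neg {A : VonNeumannAlgebra H} {φ : (H →L[ℂ] H) → ℂ}
    (hφ : IsStateOn (A : Set (H →L[ℂ] H)) φ) {a : H →L[ℂ] H} (ha : a ∈ A) :
    φ (-a) = - φ a := by
  have := hφ.2.2.1 (-1) a ha
  simpa using this

lemma state_sub {A : VonNeumannAlgebra H} {φ : (H →L[ℂ] H) → ℂ}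
    (hφ : IsStateOn (A : Set (H →L[ℂ] H)) φ) {a b : H →L[ℂ] H} (ha : a ∈ A) (hb : b ∈ A) :
    φ (a - b) = φ a - φ b := by
  rw [sub_eq_add_neg, hφ.2.1 a ha (-b) (neg_mem hb), state_neg hφ hb, sub_eq_add_neg]

lemma state_unit {A : VonNeumannAlgebra H} {φ : (H →L[ℂ] H) → ℂ}
    (hφ : IsStateOn (A : Set (H →L[ℂ] H)) φ) {a : H →L[ℂ] H} (ha : a ∈ A) (h0 : 0 ≤ a)
    (h1 : a ≤ 1) : 0 ≤ (φ a).re ∧ (φ a).re ≤ 1 ∧ (φ a).im = 0 := by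
  have h := state_pos hφ ha h0
  have h' := state_pos hφ (sub_mem (one_mem A) ha) (sub_nonneg.2 h1)
  rw [state_sub hφ (one_mem A) ha, hφ.1] at h'
  refine ⟨h.1, ?_, h.2⟩
  simpa using h'.1

lemma state_approx {A : VonNeumannAlgebra H} {φ ψ : (H →L[ℂ] H) → ℂ}
    (hφ : IsStateOn (A : Set (H →L[ℂ] H)) φ) (hψ : IsStateOn (A : Set (H →L[ℂ] H)) ψ)
    (hP : ∀ p ∈ A, IsProjOp p → φ p = ψ p) (n : ℕ) :
    ∀ a ∈ A, 0 ≤ a → a ≤ 1 → |(φ a).re - (ψ a).re| ≤ (1 / 2) ^ n := by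
  induction n with
  | zero =>
    intro a ha h0 h1
    have h2 := state_unit hφ ha h0 h1
    have h3 := state_unit hψ ha h0 h1
    rw [abs_le]; constructor <;> norm_num <;> linarith
  | succ n ih =>
    intro a ha h0 h1
    obtain ⟨p, hpA, hp, g0, g1⟩ := halving ha h0 h1
    have := ih _ (sub_mem (add_mem ha ha) hpA) g0 g1
    rw [state_sub hφ (add_mem ha ha) hpA, state_sub hψ (add_mem ha ha) hpA, hφ.2.1 a ha a ha,
      hψ.2.1 a ha a ha, hP p hpA hp] at this
    simp only [Complex.sub_re, Complex.add_re] at this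
    rw [pow_succ]
    rw [abs_le] at this ⊢
    constructor <;> linarith [this.1, this.2]

lemma state_eq_unit {A : VonNeumannAlgebra H} {φ ψ : (H →L[ℂ] H) → ℂ}
    (hφ : IsStateOn (A : Set (H →L[ℂ] H)) φ) (hψ : IsStateOn (A : Set (H →L[ℂ] H)) ψ)
    (hP : ∀ p ∈ A, IsProjOp p → φ p = ψ p) {a : H →L[ℂ] H} (ha : a ∈ A) (h0 : 0 ≤ a)
    (h1 : a ≤ 1) : φ a = ψ a := by
  have h2 := state_unit hφ ha h0 h1
  have h3 := state_unit hψ ha h0 h1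
  apply Complex.ext
  · have : |(φ a).re - (ψ a).re| ≤ 0 := by
      refine ge_of_tendsto' (tendsto_pow_atTop_nhds_zero_of_lt_one (r := (1 / 2 : ℝ))
        (by norm_num) (by norm_num)) fun n => ?_
      exact state_approx hφ hψ hP n a ha h0 h1
    exact sub_eq_zero.1 (abs_nonpos_iff.1 this)
  · rw [h2.2.2, h3.2.2]

open scoped ComplexOrder in
lemma state_eq_sa {A : VonNeumannAlgebra H} {φ ψ : (H →L[ℂ] H) → ℂ}
    (hφ : IsStateOn (A : Set (H →L[ℂ] H)) φ) (hψ : IsStateOn (A : Set (H →L[ℂ] H)) ψ)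
    (hP : ∀ p ∈ A, IsProjOp p → φ p = ψ p) {a : H →L[ℂ] H} (ha : a ∈ A) (h0 : 0 ≤ a) :
    φ a = ψ a := by
  obtain ⟨r, hr, hr1⟩ : ∃ r : ℝ, 0 < r ∧ r * ‖a‖ ≤ 1 := by
    refine ⟨(‖a‖ + 1)⁻¹, by positivity, ?_⟩
    rw [inv_mul_le_iff₀ (by positivity)]; linarith
  have e0 : 0 ≤ (r : ℂ) • a := smul_nonneg (by exact_mod_cast hr.le) h0
  have e1 : (r : ℂ) • a ≤ 1 := by
    rw [← CStarAlgebra.norm_le_one_iff_of_nonneg _ e0, norm_smul]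
    simpa [abs_of_pos hr] using hr1
  have := state_eq_unit hφ hψ hP (vn_smul A r ha) e0 e1
  rw [hφ.2.2.1 _ a ha, hψ.2.2.1 _ a ha] at this
  exact mul_left_cancel₀ (by exact_mod_cast hr.ne') this

lemma state_eq {A : VonNeumannAlgebra H} {φ ψ : (H →L[ℂ] H) → ℂ}
    (hφ : IsStateOn (A : Set (H →L[ℂ] H)) φ) (hψ : IsStateOn (A : Set (H →L[ℂ] H)) ψ)
    (hP : ∀ p ∈ A, IsProjOp p → φ p = ψ p) {a : H →L[ℂ] H} (ha : a ∈ A) :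
    φ a = ψ a := by
  have key : ∀ b ∈ A, IsSelfAdjoint b → φ b = ψ b := by
    intro b hb hs
    rw [← CFC.posPart_sub_negPart b hs, state_sub hφ (vn_posPart hb) (vn_negPart hb),
      state_sub hψ (vn_posPart hb) (vn_negPart hb),
      state_eq_sa hφ hψ hP (vn_posPart hb) (CFC.posPart_nonneg b),
      state_eq_sa hφ hψ hP (vn_negPart hb) (CFC.negPart_nonneg b)]
  have hr : a + star a ∈ A := add_mem ha (star_mem ha)
  have hi : Complex.I • (a - star a) ∈ A := vn_smul A _ (sub_mem ha (star_mem ha))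
  have k1 := key _ hr (IsSelfAdjoint.add_star_self a)
  have k2 := key _ hi (by
    rw [IsSelfAdjoint, star_smul, star_sub, star_star]
    simp [smul_sub]
    abel)
  have hd : a = (1 / 2 : ℂ) • (a + star a) + (-Complex.I / 2) • (Complex.I • (a - star a)) := by
    rw [smul_smul]
    have : -Complex.I / 2 * Complex.I = 1 / 2 := by
      rw [div_mul_eq_mul_div, neg_mul, Complex.I_mul_I]; norm_num
    rw [this, ← smul_add, add_add_sub_cancel, ← two_smul ℂ a, smul_smul]; norm_num
  rw [hd, hφ.2.1 _ (vn_smul A _ hr) _ (vn_smul A _ hi), hψ.2.1 _ (vn_smul A _ hr) _ (vn_smul A _ hi),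
    hφ.2.2.1 _ _ hr, hφ.2.2.1 _ _ hi, hψ.2.2.1 _ _ hr, hψ.2.2.1 _ _ hi, k1, k2]

/-- The von Neumann algebra generated by a set. -/
noncomputable def vnGen (s : Set (H →L[ℂ] H)) : VonNeumannAlgebra H where
  toStarSubalgebra := StarSubalgebra.centralizer ℂ (StarSubalgebra.centralizer ℂ s : Set (H →L[ℂ] H))
  centralizer_centralizer' := by
    change Set.centralizer (Set.centralizer ((StarSubalgebra.centralizer ℂ
      (StarSubalgebra.centralizer ℂ s : Set (H →L[ℂ] H)) : StarSubalgebra ℂ (H →L[ℂ] H)) :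
      Set (H →L[ℂ] H))) = ((StarSubalgebra.centralizer ℂ
      (StarSubalgebra.centralizer ℂ s : Set (H →L[ℂ] H)) : StarSubalgebra ℂ (H →L[ℂ] H)) :
      Set (H →L[ℂ] H))
    rw [StarSubalgebra.coe_centralizer_centralizer, Set.centralizer_centralizer_centralizer]

lemma coe_vnGen (s : Set (H →L[ℂ] H)) :
    (vnGen s : Set (H →L[ℂ] H)) = (s ∪ star s).centralizer.centralizer :=
  StarSubalgebra.coe_centralizer_centralizer ℂ s

lemma subset_vnGen {s : Set (H →L[ℂ] H)} {x : H →L[ℂ] H} (hx : x ∈ s) : x ∈ vnGen s := by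
  rw [← SetLike.mem_coe, coe_vnGen]
  exact Set.subset_centralizer_centralizer (Or.inl hx)

lemma vnGen_le {R : VonNeumannAlgebra H} {s : Set (H →L[ℂ] H)}
    (h : s ⊆ (R : Set (H →L[ℂ] H))) : (vnGen s : Set (H →L[ℂ] H)) ⊆ R := by
  rw [coe_vnGen, ← VonNeumannAlgebra.centralizer_centralizer R]
  refine Set.centralizer_subset (Set.centralizer_subset (Set.union_subset h ?_))
  intro x hx
  have : star x ∈ R := h hx
  simpa using star_mem this

lemma vnGen_abelian {s : Set (H →L[ℂ] H)} (hs : ∀ x ∈ s, IsSelfAdjoint x)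
    (hc : ∀ x ∈ s, ∀ y ∈ s, x * y = y * x) : IsAbelianVN (vnGen s) := by
  have : s ∪ star s = s := by
    apply Set.union_eq_left.2
    intro x hx
    have h1 := hs _ hx
    have : star x = x := by rw [← h1.star_eq, star_star]
    rw [← this]; exact hx
  intro a ha b hb
  rw [← SetLike.mem_coe, coe_vnGen, this] at ha hb
  exact Set.centralizer_centralizer_comm_of_comm hc _ ha _ hb

lemma mu_zero {R : VonNeumannAlgebra H} {μ : (H →L[ℂ] H) → ℝ} (hμ : IsProbMeasureOn R μ) :
    μ 0 = 0 := by
  have hz : IsProjOp (0 : H →L[ℂ] H) := ⟨IsSelfAdjoint.zero _, IsIdempotentElem.zero⟩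
  have := hμ.2.2 0 0 (zero_mem R) (zero_mem R) hz hz (by simp)
  simp at this
  exact this

lemma mu_split {R : VonNeumannAlgebra H} {μ : (H →L[ℂ] H) → ℝ} (hμ : IsProbMeasureOn R μ)
    {p q : H →L[ℂ] H} (hp : p ∈ R) (hq : q ∈ R) (hpP : IsProjOp p) (hqP : IsProjOp q)
    (h : p * q = q * p) : μ q = μ (p * q) + μ ((1 - p) * q) := by
  have hc : (1 - p) * q = q * (1 - p) := by rw [sub_mul, mul_sub, h]; simp
  rw [← hμ.2.2 _ _ (mul_mem hp hq) (mul_mem (sub_mem (one_mem R) hp) hq) (proj_mul hpP hqP h)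
    (proj_mul (proj_compl hpP) hqP hc)]
  · congr 1; rw [sub_mul]; simp
  · rw [hc, mul_assoc, ← mul_assoc q, hqP.2.eq, ← hc, ← mul_assoc, mul_sub, mul_one, hpP.2.eq]
    simp

lemma mu_pos {R A : VonNeumannAlgebra H} {μ : (H →L[ℂ] H) → ℝ} (hμ : IsProbMeasureOn R μ)
    (hA : IsAbelianVN A) (hAR : (A : Set (H →L[ℂ] H)) ⊆ R)
    (c : {p : H →L[ℂ] H // p ∈ A ∧ IsProjOp p} → ℝ)
    (s : Finset {p : H →L[ℂ] H // p ∈ A ∧ IsProjOp p}) :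
    ∀ (c0 : ℝ) (q : H →L[ℂ] H), q ∈ A → IsProjOp q →
      0 ≤ (c0 • (1 : H →L[ℂ] H) + ∑ p ∈ s, c p • (p : H →L[ℂ] H)) * q →
      0 ≤ c0 * μ q + ∑ p ∈ s, c p * μ (p * q) := by
  classical
  induction s using Finset.induction_on with
  | empty =>
    intro c0 q hqA hq h
    simp only [Finset.sum_empty, add_zero, smul_mul_assoc, one_mul] at h ⊢
    by_cases hc : 0 ≤ c0
    · exact mul_nonneg hc (hμ.2.1 q (hAR hqA) hq).1
    · have h1 : c0 • q ≤ 0 := smul_nonpos_of_nonpos_of_nonneg (not_le.1 hc).le (proj_nonneg hq)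
      have h2 : c0 • q = 0 := le_antisymm h1 h
      have h3 : q = 0 := (smul_eq_zero.1 h2).resolve_left (fun h => hc h.ge)
      rw [h3, mu_zero hμ, mul_zero]
  | insert p s hps ih =>
    intro c0 q hqA hq h
    obtain ⟨hpA, hp⟩ := p.2
    set X := ∑ p ∈ s, c p • (p : H →L[ℂ] H) with hX
    rw [Finset.sum_insert hps] at h ⊢
    rw [← hX] at h
    have hXA : X ∈ A := sum_mem fun i _ => by
      have := vn_smul A (c i : ℂ) i.2.1
      rwa [Complex.coe_smul] at this
    have hpq := hA _ hpA _ hqA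
    have hp'A : 1 - (p : H →L[ℂ] H) ∈ A := sub_mem (one_mem A) hpA
    have hp'q := hA _ hp'A _ hqA
    have hXp := hA _ hXA _ hpA
    have i1 := ih (c0 + c p) (p * q) (mul_mem hpA hqA) (proj_mul hp hq hpq) (by
      have := hp.1.conjugate_nonneg h
      convert this using 1
      simp only [add_mul, mul_add, smul_mul_assoc, mul_smul_comm, one_mul, add_smul]
      have e1 : (p : H →L[ℂ] H) * q * p = p * q := by
        rw [hpq, mul_assoc, hp.2.eq]
      have e2 : (p : H →L[ℂ] H) * (p * q) * p = p * q := by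
        rw [← mul_assoc, hp.2.eq, e1]
      have e3 : (p : H →L[ℂ] H) * (X * q) * p = X * (p * q) := by
        rw [← mul_assoc, ← hXp, mul_assoc, mul_assoc, ← mul_assoc _ q, e1]
      rw [e1, e2, e3, add_assoc])
    have i2 := ih c0 ((1 - p) * q) (mul_mem hp'A hqA) (proj_mul (proj_compl hp) hq hp'q) (by
      have := (proj_compl hp).1.conjugate_nonneg h
      convert this using 1
      have e0 : (1 - (p : H →L[ℂ] H)) * p = 0 := by rw [sub_mul, hp.2.eq, one_mul, sub_self]
      have e1 : (1 - (p : H →L[ℂ] H)) * q * (1 - p) = (1 - p) * q := by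
        rw [hp'q, mul_assoc, (proj_compl hp).2.eq]
      have e2 : (1 - (p : H →L[ℂ] H)) * (p * q) * (1 - p) = 0 := by
        rw [← mul_assoc, e0, zero_mul, zero_mul]
      have e3 : (1 - (p : H →L[ℂ] H)) * (X * q) * (1 - p) = X * ((1 - p) * q) := by
        rw [← mul_assoc, ← hA _ hXA _ hp'A, mul_assoc, mul_assoc, ← mul_assoc _ q, e1]
      generalize hg : 1 - (p : H →L[ℂ] H) = p' at *
      simp only [add_mul, mul_add, smul_mul_assoc, mul_smul_comm, one_mul]
      rw [e1, e2, e3, smul_zero, zero_add])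
    have j1 := mu_split hμ (hAR hpA) (hAR hqA) hp hq hpq
    have j2 : ∑ i ∈ s, c i * μ (i * q) = ∑ i ∈ s, c i * μ (i * (p * q)) +
        ∑ i ∈ s, c i * μ (i * ((1 - p) * q)) := by
      rw [← Finset.sum_add_distrib]
      refine Finset.sum_congr rfl fun i _ => ?_
      have hiq := hA _ i.2.1 _ hqA
      rw [mu_split hμ (hAR hpA) (hAR (mul_mem i.2.1 hqA)) hp (proj_mul i.2.2 hq hiq)
        (hA _ hpA _ (mul_mem i.2.1 hqA)), ← mul_assoc, hA _ hpA _ i.2.1, mul_assoc,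
        ← mul_assoc (1 - _), hA _ hp'A _ i.2.1, mul_assoc, mul_add]
    rw [j1, j2]
    linarith

lemma riesz_from {V E : Type*} [AddCommGroup V] [Module ℝ V] [AddCommGroup E] [Module ℝ E]
    (C : PointedCone ℝ E) (T : V →ₗ[ℝ] E) (M : V →ₗ[ℝ] ℝ)
    (hpos : ∀ v, T v ∈ C → 0 ≤ M v) (hd : ∀ y, ∃ v, T v + y ∈ C) :
    ∃ G : E →ₗ[ℝ] ℝ, (∀ v, G (T v) = M v) ∧ ∀ x ∈ C, 0 ≤ G x := by
  have hker : ∀ v, T v = 0 → M v = 0 := by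
    intro v hv
    apply le_antisymm
    · have := hpos (-v) (by simp [hv])
      simpa using this
    · exact hpos v (by simp [hv])
  obtain ⟨g, hg⟩ := LinearMap.exists_rightInverse_of_surjective T.rangeRestrict
    (LinearMap.range_rangeRestrict T)
  have hg' : ∀ x : LinearMap.range T, T (g x) = x := fun x =>
    congrArg Subtype.val (LinearMap.congr_fun hg x)
  let f : E →ₗ.[ℝ] ℝ := ⟨LinearMap.range T, M ∘ₗ g⟩
  obtain ⟨G, hG1, hG2⟩ := riesz_extension C f
    (fun x hx => hpos (g x) (by rw [hg']; exact hx))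
    (fun y => by
      obtain ⟨v, hv⟩ := hd y
      exact ⟨⟨T v, ⟨v, rfl⟩⟩, hv⟩)
  refine ⟨G, fun v => ?_, hG2⟩
  have h1 := hG1 ⟨T v, ⟨v, rfl⟩⟩
  have h2 : M (g ⟨T v, ⟨v, rfl⟩⟩) = M v := by
    rw [← sub_eq_zero, ← map_sub]
    apply hker
    rw [map_sub, hg', sub_self]
  exact h1.trans h2

lemma mu_extend {R A : VonNeumannAlgebra H} {μ : (H →L[ℂ] H) → ℝ} (hμ : IsProbMeasureOn R μ)
    (hA : IsAbelianVN A) (hAR : (A : Set (H →L[ℂ] H)) ⊆ R) :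
    ∃ φ : (H →L[ℂ] H) → ℂ, IsStateOn (A : Set (H →L[ℂ] H)) φ ∧
      ∀ p ∈ A, IsProjOp p → φ p = (μ p : ℂ) := by
  classical
  let P := {p : H →L[ℂ] H // p ∈ A ∧ IsProjOp p}
  let E := selfAdjoint (H →L[ℂ] H)
  let T : (P →₀ ℝ) →ₗ[ℝ] E := Finsupp.linearCombination ℝ (fun p : P => (⟨p.1, p.2.2.1⟩ : E))
  let M : (P →₀ ℝ) →ₗ[ℝ] ℝ := Finsupp.linearCombination ℝ (fun p : P => μ p.1)
  have hone : IsProjOp (1 : H →L[ℂ] H) := ⟨IsSelfAdjoint.one _, IsIdempotentElem.one⟩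
  have hT : ∀ v, ((T v : E) : H →L[ℂ] H) = ∑ p ∈ v.support, v p • (p.1 : H →L[ℂ] H) := by
    intro v
    simp [T, Finsupp.linearCombination_apply, Finsupp.sum]
    rfl
  have hTs : ∀ (p : P) (r : ℝ), ((T (Finsupp.single p r) : E) : H →L[ℂ] H) = r • p.1 :=
    fun p r => congrArg Subtype.val (Finsupp.linearCombination_single ℝ r p)
  have hM : ∀ v, M v = ∑ p ∈ v.support, v p * μ p.1 := by
    intro v
    simp [M, Finsupp.linearCombination_apply, Finsupp.sum]
  have hpos : ∀ v, 0 ≤ ((T v : E) : H →L[ℂ] H) → 0 ≤ M v := by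
    intro v hv
    have := mu_pos hμ hA hAR v v.support 0 1 (one_mem A) hone (by
      rw [hT] at hv
      simpa using hv)
    rw [hM]
    simpa using this
  let C : PointedCone ℝ E :=
    { carrier := {x | 0 ≤ (x : H →L[ℂ] H)}
      add_mem' := fun {a b} ha hb => by
        simpa using add_nonneg (show 0 ≤ (a : H →L[ℂ] H) from ha) hb
      zero_mem' := by simp
      smul_mem' := fun c x hx => by
        change 0 ≤ (c : ℝ) • (x : H →L[ℂ] H)
        exact smul_nonneg c.2 hx }
  obtain ⟨G, hG1, hG2⟩ := riesz_from C T M hpos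
    (fun y => by
      refine ⟨Finsupp.single ⟨1, one_mem A, hone⟩ ‖(y : H →L[ℂ] H)‖, ?_⟩
      change 0 ≤ ((_ : E) : H →L[ℂ] H) + (y : H →L[ℂ] H)
      have := IsSelfAdjoint.neg_algebraMap_norm_le_self (a := (y : H →L[ℂ] H)) y.2
      rw [neg_le_iff_add_nonneg, add_comm, Algebra.algebraMap_eq_smul_one] at this
      rw [hTs]
      exact this)
  have hGp : ∀ (p : H →L[ℂ] H) (hp : p ∈ A) (hP : IsProjOp p), G ⟨p, hP.1⟩ = μ p := by
    intro p hp hP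
    have e : T (Finsupp.single (⟨p, hp, hP⟩ : P) 1) = ⟨p, hP.1⟩ :=
      Subtype.ext ((hTs _ 1).trans (one_smul ℝ p))
    have h1 := hG1 (Finsupp.single (⟨p, hp, hP⟩ : P) 1)
    rw [e] at h1
    have h3 : M (Finsupp.single (⟨p, hp, hP⟩ : P) 1) = μ p := by simp [M]
    exact h1.trans h3
  have hsa : ∀ (x : H →L[ℂ] H) (hx : IsSelfAdjoint x),
      realPart x = (⟨x, hx⟩ : E) ∧ imaginaryPart x = 0 := by
    intro x hx
    exact ⟨Subtype.ext hx.coe_realPart, hx.imaginaryPart⟩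
  have hφsa : ∀ (x : H →L[ℂ] H) (hx : IsSelfAdjoint x),
      (⟨G (realPart x), G (imaginaryPart x)⟩ : ℂ) = (G ⟨x, hx⟩ : ℂ) := by
    intro x hx
    rw [(hsa x hx).1, (hsa x hx).2, map_zero]
    rfl
  refine ⟨fun x => ⟨G (realPart x), G (imaginaryPart x)⟩, ⟨?_, ?_, ?_, ?_⟩, ?_⟩
  · dsimp only
    rw [hφsa 1 hone.1, hGp 1 (one_mem A) hone, hμ.1]; simp
  · intro a _ b _
    apply Complex.ext <;> simp
  · intro c a _
    apply Complex.ext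
    · have : realPart (c • a) = c.re • realPart a - c.im • imaginaryPart a := realPart_smul c a
      change G (realPart (c • a)) = _
      rw [this, map_sub, map_smul, map_smul]
      rfl
    · have : imaginaryPart (c • a) = c.re • imaginaryPart a + c.im • realPart a :=
        imaginaryPart_smul c a
      change G (imaginaryPart (c • a)) = _
      rw [this, map_add, map_smul, map_smul]
      rfl
  · intro a _
    beta_reduce
    rw [hφsa _ (IsSelfAdjoint.star_mul_self a)]
    refine ⟨?_, Complex.ofReal_im _⟩
    rw [Complex.ofReal_re]
    exact hG2 _ (star_mul_self_nonneg a)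
  · intro p hp hP
    dsimp only
    rw [hφsa p hP.1, hGp p hp hP]

/-- for a von Neumann algebra `R`, every finitely additive
probability measure on `P(R)` extends to a state of `R` iff every global
section of the state presheaf of `R` is induced by a state of `R`. -/
theorem measure_extension_iff_state_sections (R : VonNeumannAlgebra H) :
    (∀ μ : (H →L[ℂ] H) → ℝ, IsProbMeasureOn R μ →
        ∃ φ : (H →L[ℂ] H) → ℂ, IsStateOn (R : Set (H →L[ℂ] H)) φ ∧
          ∀ p, p ∈ R → IsProjOp p → φ p = (μ p : ℂ)) ↔
    (∀ Φ : VonNeumannAlgebra H → (H →L[ℂ] H) → ℂ, IsStateSection R Φ →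
        ∃ φ : (H →L[ℂ] H) → ℂ, IsStateOn (R : Set (H →L[ℂ] H)) φ ∧
          ∀ A : VonNeumannAlgebra H, IsAbelianVN A → (A : Set (H →L[ℂ] H)) ⊆ R →
            ∀ a ∈ A, φ a = Φ A a) := by
  constructor
  · intro h Φ hΦ
    have hgen : ∀ p, p ∈ R → IsProjOp p → IsAbelianVN (vnGen {p}) ∧
        (vnGen {p} : Set (H →L[ℂ] H)) ⊆ R ∧ p ∈ vnGen {p} := by
      intro p hp hP
      refine ⟨vnGen_abelian ?_ ?_, vnGen_le ?_, subset_vnGen rfl⟩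
      · rintro x rfl; exact hP.1
      · rintro x rfl y rfl; rfl
      · rintro x rfl; exact hp
    have hagree : ∀ A : VonNeumannAlgebra H, IsAbelianVN A → (A : Set (H →L[ℂ] H)) ⊆ R →
        ∀ p ∈ A, IsProjOp p → Φ (vnGen {p}) p = Φ A p := by
      intro A hA hAR p hp hP
      obtain ⟨h1, h2, h3⟩ := hgen p (hAR hp) hP
      refine hΦ.2 _ A h1 hA h2 hAR (vnGen_le ?_) p h3
      rintro x rfl; exact hp
    have hproj1 : ∀ p : H →L[ℂ] H, IsProjOp p → p ≤ 1 := fun p hP =>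
      sub_nonneg.1 (proj_nonneg (proj_compl hP))
    have hone : IsProjOp (1 : H →L[ℂ] H) := ⟨IsSelfAdjoint.one _, IsIdempotentElem.one⟩
    have hunit : ∀ p, p ∈ R → IsProjOp p → 0 ≤ (Φ (vnGen {p}) p).re ∧
        (Φ (vnGen {p}) p).re ≤ 1 ∧ (Φ (vnGen {p}) p).im = 0 := by
      intro p hp hP
      obtain ⟨h1, h2, h3⟩ := hgen p hp hP
      exact state_unit (hΦ.1 _ h1 h2) h3 (proj_nonneg hP) (hproj1 p hP)
    obtain ⟨φ, hφ, hφμ⟩ := h (fun p => (Φ (vnGen {p}) p).re) (by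
      refine ⟨?_, fun p hp hP => ⟨(hunit p hp hP).1, (hunit p hp hP).2.1⟩, ?_⟩
      · obtain ⟨h1, h2, h3⟩ := hgen 1 (one_mem R) hone
        simp [(hΦ.1 _ h1 h2).1]
      · intro p q hp hq hP hQ hpq
        have hqp : q * p = 0 := by
          have := congrArg star hpq
          simpa [hP.1.star_eq, hQ.1.star_eq] using this
        have hab : IsAbelianVN (vnGen {p, q}) := by
          apply vnGen_abelian
          · rintro x (rfl | rfl)
            exacts [hP.1, hQ.1]
          · rintro x (rfl | rfl) y (rfl | rfl)
            exacts [rfl, hpq.trans hqp.symm, hqp.trans hpq.symm, rfl]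
        have hle : (vnGen {p, q} : Set (H →L[ℂ] H)) ⊆ R := by
          apply vnGen_le
          rintro x (rfl | rfl)
          exacts [hp, hq]
        have hpm : p ∈ vnGen {p, q} := subset_vnGen (Or.inl rfl)
        have hqm : q ∈ vnGen {p, q} := subset_vnGen (Or.inr rfl)
        have hs : IsProjOp (p + q) := by
          refine ⟨hP.1.add hQ.1, ?_⟩
          rw [IsIdempotentElem, add_mul, mul_add, mul_add, hP.2.eq, hQ.2.eq, hpq, hqp]
          simp
        dsimp only
        rw [hagree _ hab hle p hpm hP, hagree _ hab hle q hqm hQ,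
          hagree _ hab hle _ (add_mem hpm hqm) hs, (hΦ.1 _ hab hle).2.1 p hpm q hqm]
        simp)
    refine ⟨φ, hφ, fun A hA hAR a ha => ?_⟩
    have hφA : IsStateOn (A : Set (H →L[ℂ] H)) φ :=
      ⟨hφ.1, fun a ha b hb => hφ.2.1 a (hAR ha) b (hAR hb),
        fun c a ha => hφ.2.2.1 c a (hAR ha), fun a ha => hφ.2.2.2 a (hAR ha)⟩
    refine state_eq hφA (hΦ.1 A hA hAR) (fun p hp hP => ?_) ha
    rw [hφμ p (hAR hp) hP, ← hagree A hA hAR p hp hP]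
    apply Complex.ext
    · simp
    · simp [(hunit p (hAR hp) hP).2.2]
  · intro h μ hμ
    classical
    let Φ : VonNeumannAlgebra H → (H →L[ℂ] H) → ℂ := fun A =>
      if hA : IsAbelianVN A ∧ (A : Set (H →L[ℂ] H)) ⊆ R then
        Classical.choose (mu_extend hμ hA.1 hA.2) else 0
    have hΦ : ∀ A : VonNeumannAlgebra H, IsAbelianVN A → (A : Set (H →L[ℂ] H)) ⊆ R →
        IsStateOn (A : Set (H →L[ℂ] H)) (Φ A) ∧ ∀ p ∈ A, IsProjOp p → Φ A p = (μ p : ℂ) := by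
      intro A hA hAR
      have e : Φ A = Classical.choose (mu_extend hμ hA hAR) := dif_pos ⟨hA, hAR⟩
      rw [e]
      exact Classical.choose_spec (mu_extend hμ hA hAR)
    obtain ⟨φ, hφ, hφΦ⟩ := h Φ ⟨fun A hA hAR => (hΦ A hA hAR).1, by
      intro A B hA hB hAR hBR hAB a ha
      have hs := (hΦ B hB hBR).1
      have hBA : IsStateOn (A : Set (H →L[ℂ] H)) (Φ B) :=
        ⟨hs.1, fun a ha b hb => hs.2.1 a (hAB ha) b (hAB hb),
          fun c a ha => hs.2.2.1 c a (hAB ha), fun a ha => hs.2.2.2 a (hAB ha)⟩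
      refine state_eq (hΦ A hA hAR).1 hBA (fun p hp hP => ?_) ha
      rw [(hΦ A hA hAR).2 p hp hP, (hΦ B hB hBR).2 p (hAB hp) hP]⟩
    refine ⟨φ, hφ, fun p hp hP => ?_⟩
    have h1 : IsAbelianVN (vnGen {p}) := by
      apply vnGen_abelian
      · rintro x rfl; exact hP.1
      · rintro x rfl y rfl; rfl
    have h2 : (vnGen {p} : Set (H →L[ℂ] H)) ⊆ R := by
      apply vnGen_le
      rintro x rfl; exact hp
    have h3 : p ∈ vnGen {p} := subset_vnGen rfl
    rw [hφΦ _ h1 h2 p h3, (hΦ _ h1 h2).2 p h3 hP]
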